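/- Let (x_n)_{n∈ℕ} be a sequence in ℓ_1 and let (g_n)_{n∈ℕ} be a sequence in ℓ_2 (so each g_n is also a bounded sequence), with pairing ⟨f,g⟩ := Σ_j f(j)g(j). Suppose that ⟨x_n, g_m⟩ = δ_{mn}; that the linear span of (x_n) is dense both in ℓ_1 and in ℓ_2; that 0 < inf_n ‖x_n‖_1 ≤ sup_n ‖x_n‖_1 < ∞ and 0 < inf_n ‖x_n‖_2 ≤ sup_n ‖x_n‖_2 < ∞; that sup_n ‖g_n‖_∞ < ∞ and sup_n ‖g_n‖_2 < ∞; and that the system (x_n, g_n) is quasi-greedy both as a basis of ℓ_1 and as a basis of ℓ_2 (i.e., there is C₀ ≥ 1 such that ‖Σ_{n∈A} ⟨f,g_n⟩ x_n‖ ≤ C₀‖f‖ in each of the two norms, for every f in the respective space and every greedy set A of f). Then for every 1<p<2 the sequence (x_n) is equivalent in ℓ_p to the canonical basis of ℓ_p: there exist 0<c≤C<∞ such that for every finitely supported real sequence (a_n), c·(Σ_n |a_n|^p)^{1/p} ≤ ‖Σ_n a_n x_n‖_{ℓ_p} ≤ C·(Σ_n |a_n|^p)^{1/p}. -/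

import Mathlib

open scoped BigOperators

/-- The `ℓ_1` norm of a sequence. -/
noncomputable def norm1 (f : ℕ → ℝ) : ℝ := ∑' j, |f j|

/-- The `ℓ_2` norm of a sequence. -/
noncomputable def norm2 (f : ℕ → ℝ) : ℝ := Real.sqrt (∑' j, f j ^ 2)

/-- The `ℓ_p` norm of a sequence. -/
noncomputable def normP (p : ℝ) (f : ℕ → ℝ) : ℝ := (∑' j, |f j| ^ p) ^ (1 / p)

/-- Membership in `ℓ_1`. -/
def Mem1 (f : ℕ → ℝ) : Prop := Summable fun j => |f j|

/-- Membership in `ℓ_2`. -/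
def Mem2 (f : ℕ → ℝ) : Prop := Summable fun j => f j ^ 2

/-- The pairing `⟨f, g⟩ = ∑_j f j · g j`. -/
noncomputable def pairing (f g : ℕ → ℝ) : ℝ := ∑' j, f j * g j

/-- `A` is a greedy set for the coefficient sequence `coef`. -/
def GreedySet (coef : ℕ → ℝ) (A : Finset ℕ) : Prop :=
  ∀ n ∈ A, ∀ k ∉ A, |coef k| ≤ |coef n|

section
open MeasureTheory Set

lemma marc_int (p r u : ℝ) (hp : 1 < p) (hr : p < r) (hu : 0 ≤ u) :
    ∫⁻ t in Ioi (0:ℝ), (if t < u then ENNReal.ofReal (u / t) else ENNReal.ofReal (u ^ r / t ^ r)) *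
      ENNReal.ofReal (t ^ (p - 1)) ≤ ENNReal.ofReal (1 / (p - 1) + 1 / (r - p)) * ENNReal.ofReal (u ^ p) := by
  rcases hu.eq_or_lt with rfl | hu
  · rw [setLIntegral_congr_fun (g := fun _ => 0) measurableSet_Ioi]
    · simp
    · intro t ht
      have : ¬ t < 0 := not_lt.2 (le_of_lt ht)
      simp [this, Real.zero_rpow (show r ≠ 0 by linarith)]
  have hsplit : Ioi (0:ℝ) = Ioc 0 u ∪ Ioi u := (Ioc_union_Ioi_eq_Ioi hu.le).symm
  rw [hsplit]
  refine (lintegral_union_le _ _ _).trans ?_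
  rw [← ENNReal.ofReal_mul (by have := sub_pos.2 hp; have := sub_pos.2 hr; positivity), add_mul, ENNReal.ofReal_add
    (by have := sub_pos.2 hp; positivity) (by have := sub_pos.2 hr; positivity)]
  gcongr
  · have : ∫⁻ t in Ioc 0 u, (if t < u then ENNReal.ofReal (u / t) else ENNReal.ofReal (u ^ r / t ^ r)) *
      ENNReal.ofReal (t ^ (p - 1)) = ∫⁻ t in Ioc 0 u, ENNReal.ofReal (u * t ^ (p - 2)) := by
      refine setLIntegral_congr_fun measurableSet_Ioc ?_
      intro t ht
      have ht0 : 0 < t := ht.1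
      have h1 : u / t * t ^ (p - 1) = u * t ^ (p - 2) := by
        rw [show p - 1 = (p - 2) + 1 by ring, Real.rpow_add_one ht0.ne']; field_simp
      dsimp only
      split_ifs with h
      · rw [← ENNReal.ofReal_mul (by positivity), h1]
      · have : t = u := le_antisymm ht.2 (not_lt.1 h)
        subst this
        rw [← ENNReal.ofReal_mul (by positivity), ← h1]
        congr 2
        rw [div_self (by positivity), div_self (by positivity)]
    rw [this, ← ofReal_integral_eq_lintegral_ofReal]
    · apply ENNReal.ofReal_le_ofReal
      rw [integral_const_mul, ← intervalIntegral.integral_of_le hu.le, integral_rpow (by left; linarith)]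
      rw [show p - 2 + 1 = p - 1 by ring, Real.zero_rpow (by linarith)]
      apply le_of_eq
      rw [show u ^ p = u ^ (p-1) * u by rw [← Real.rpow_add_one hu.ne']; ring_nf]
      ring
    · apply Integrable.const_mul
      have := intervalIntegral.intervalIntegrable_rpow' (a := 0) (b := u) (r := p - 2) (by linarith)
      exact (intervalIntegrable_iff_integrableOn_Ioc_of_le hu.le).1 this
    · filter_upwards [ae_restrict_mem measurableSet_Ioc] with t ht
      have : 0 < t := ht.1
      simp only [Pi.zero_apply]; positivity
  · have : ∫⁻ t in Ioi u, (if t < u then ENNReal.ofReal (u / t) else ENNReal.ofReal (u ^ r / t ^ r)) *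
      ENNReal.ofReal (t ^ (p - 1)) = ∫⁻ t in Ioi u, ENNReal.ofReal (u ^ r * t ^ (p - 1 - r)) := by
      refine setLIntegral_congr_fun measurableSet_Ioi ?_
      intro t ht
      have ht0 : 0 < t := hu.trans ht
      have : ¬ t < u := not_lt.2 (le_of_lt ht)
      simp only [this, if_false]
      rw [← ENNReal.ofReal_mul (by positivity), Real.rpow_sub ht0 (p-1)]
      congr 1; ring
    rw [this, ← ofReal_integral_eq_lintegral_ofReal]
    · apply ENNReal.ofReal_le_ofReal
      rw [integral_const_mul, integral_Ioi_rpow_of_lt (by linarith) hu]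
      rw [show p - 1 - r + 1 = p - r by ring]
      apply le_of_eq
      rw [Real.rpow_sub hu]
      have : p - r ≠ 0 := by linarith
      have : r - p ≠ 0 := by linarith
      have : u ^ r ≠ 0 := by positivity
      field_simp
      ring
    · apply Integrable.const_mul
      exact integrableOn_Ioi_rpow_of_lt (by linarith) hu
    · filter_upwards [ae_restrict_mem measurableSet_Ioi] with t ht
      have : 0 < t := hu.trans ht
      simp only [Pi.zero_apply]; positivity

lemma marc (p r C : ℝ) (hp : 1 < p) (hr : p < r) (u F : ℕ → ℝ) (hu : ∀ j, 0 ≤ u j)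
    (hF : ∀ j, 0 ≤ F j)
    (h : ∀ t > 0, Measure.count {n | 2 * t < F n} ≤ ENNReal.ofReal C *
      ∑' j, (if t < u j then ENNReal.ofReal (u j / t) else ENNReal.ofReal ((u j) ^ r / t ^ r))) :
    ∑' n, ENNReal.ofReal (F n ^ p) ≤ ENNReal.ofReal (2 ^ p) * (ENNReal.ofReal p * (ENNReal.ofReal C *
      (ENNReal.ofReal (1 / (p - 1) + 1 / (r - p)) * ∑' j, ENNReal.ofReal (u j ^ p)))) := by
  have h1 : ∑' n, ENNReal.ofReal (F n ^ p) = ENNReal.ofReal (2 ^ p) *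
      ∫⁻ n, ENNReal.ofReal ((F n / 2) ^ p) ∂Measure.count := by
    rw [lintegral_count, ← ENNReal.tsum_mul_left]
    congr 1; ext n
    rw [← ENNReal.ofReal_mul (by positivity), ← Real.mul_rpow (by norm_num) (by have := hF n; positivity)]
    congr 2; ring
  rw [h1, lintegral_rpow_eq_lintegral_meas_lt_mul _ (Filter.Eventually.of_forall fun n => by
    have := hF n; simp only [Pi.zero_apply]; positivity) (measurable_of_countable _).aemeasurable (by linarith)]
  gcongr
  calc _ ≤ ∫⁻ t in Ioi (0:ℝ), ENNReal.ofReal C * ∑' j, ((if t < u j then ENNReal.ofReal (u j / t) else ENNReal.ofReal ((u j) ^ r / t ^ r)) * ENNReal.ofReal (t ^ (p - 1))) := by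
        refine setLIntegral_mono' measurableSet_Ioi fun t ht => ?_
        rw [ENNReal.tsum_mul_right, ← mul_assoc]
        gcongr
        refine le_trans (le_of_eq ?_) (h t ht)
        congr 1; ext n; simp only [mem_ofPred_eq]
        rw [lt_div_iff₀ (by norm_num), mul_comm]
    _ = ENNReal.ofReal C * ∑' j, ∫⁻ t in Ioi (0:ℝ), ((if t < u j then ENNReal.ofReal (u j / t) else ENNReal.ofReal ((u j) ^ r / t ^ r)) * ENNReal.ofReal (t ^ (p - 1))) := by
        rw [lintegral_const_mul' _ _ ENNReal.ofReal_ne_top, lintegral_tsum]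
        intro j
        apply Measurable.aemeasurable
        refine Measurable.mul (Measurable.ite measurableSet_Iio ?_ ?_) ?_ <;> fun_prop
    _ ≤ _ := by
        rw [← ENNReal.tsum_mul_left (a := ENNReal.ofReal (1 / (p - 1) + 1 / (r - p)))]
        gcongr with j
        exact marc_int p r (u j) hp hr (hu j)

end

lemma abel_lem {E : Type*} [NormedAddCommGroup E] [NormedSpace ℝ E] (v : ℕ → E) (b : ℕ → ℝ) (M : ℝ) 
    (A : Finset ℕ) : (∀ n ∈ A, 0 ≤ b n) →
    (∀ B ⊆ A, (∀ n ∈ B, ∀ k ∈ A, k ∉ B → b n ≤ b k) → ‖∑ n ∈ B, v n‖ ≤ M) →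
    ∀ c, 0 ≤ c → (∀ n ∈ A, b n ≤ c) → ‖∑ n ∈ A, b n • v n - c • ∑ n ∈ A, v n‖ ≤ c * M := by
  induction A using Finset.induction_on_max_value b with
  | empty =>
    intro _ h c hc _
    have := h ∅ (by simp) (by simp)
    simp at this ⊢; positivity
  | insert k B hk hmax ih =>
    intro h0 h c hc hbc
    have e : ∑ n ∈ insert k B, b n • v n - c • ∑ n ∈ insert k B, v n =
      (∑ n ∈ B, b n • v n - b k • ∑ n ∈ B, v n) - (c - b k) • ∑ n ∈ insert k B, v n := by
      rw [Finset.sum_insert hk, Finset.sum_insert hk]; module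
    have hk0 := h0 k (by simp)
    have i1 := ih (fun n hn => h0 n (by simp [hn])) (fun D hD hD' => h D (hD.trans (by simp)) (by
      intro n hn m hm hmD
      rcases Finset.mem_insert.1 hm with rfl | hm
      · exact hmax n (hD hn)
      · exact hD' n hn m hm hmD)) (b k) hk0 hmax
    have i2 := h (insert k B) subset_rfl (by intro n hn m hm hm'; exact absurd hm hm')
    have hck := hbc k (by simp)
    rw [e]
    refine (norm_sub_le _ _).trans ?_
    rw [norm_smul, Real.norm_of_nonneg (by linarith)]
    nlinarith

lemma abel_lem2 {E : Type*} [NormedAddCommGroup E] [NormedSpace ℝ E] (v : ℕ → E) (b : ℕ → ℝ) (M : ℝ) 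
    (A : Finset ℕ) (h0 : ∀ n ∈ A, 0 ≤ b n)
    (h : ∀ B ⊆ A, (∀ n ∈ B, ∀ k ∈ A, k ∉ B → b n ≤ b k) → ‖∑ n ∈ B, v n‖ ≤ M)
    (c : ℝ) (hc : 0 ≤ c) (hb : ∀ n ∈ A, b n ≤ c) : ‖∑ n ∈ A, b n • v n‖ ≤ 2 * c * M := by
  have h1 := abel_lem v b M A h0 h c hc hb
  have h2 := h A subset_rfl (by intro n hn m hm hm'; exact absurd hm hm')
  have h3 := norm_add_le (∑ n ∈ A, b n • v n - c • ∑ n ∈ A, v n) (c • ∑ n ∈ A, v n)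
  rw [sub_add_cancel, norm_smul, Real.norm_of_nonneg hc] at h3
  nlinarith

/-- signs -/
def IsSgn (e : ℕ → ℝ) : Prop := ∀ n, e n = 1 ∨ e n = -1

lemma IsSgn.sq {e : ℕ → ℝ} (h : IsSgn e) (n) : e n * e n = 1 := by
  rcases h n with h | h <;> simp [h]

lemma IsSgn.abs {e : ℕ → ℝ} (h : IsSgn e) (n) : |e n| = 1 := by
  rcases h n with h | h <;> simp [h]

noncomputable def sg (t : ℝ) : ℝ := if 0 ≤ t then 1 else -1

lemma sg_cases (t) : sg t = 1 ∨ sg t = -1 := by unfold sg; split_ifs <;> simp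
lemma sg_mul (t) : sg t * t = |t| := by
  unfold sg; split_ifs with h
  · simp [abs_of_nonneg h]
  · simp [abs_of_neg (not_le.1 h)]
lemma abs_mul_sg (t) : |t| * sg t = t := by
  rw [← sg_mul]; rcases sg_cases t with h | h <;> simp [h]

lemma exists_sign (M : ℕ → ℕ → ℝ) (A : Finset ℕ) :
    ∃ e : ℕ → ℝ, IsSgn e ∧ ∑ n ∈ A, M n n ≤ ∑ n ∈ A, ∑ k ∈ A, e n * e k * M n k := by
  induction A using Finset.induction_on with
  | empty => exact ⟨fun _ => 1, fun _ => Or.inl rfl, by simp⟩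
  | insert a A ha ih =>
    obtain ⟨e, he, h⟩ := ih
    set L := ∑ k ∈ A, e k * (M a k + M k a) with hL
    refine ⟨Function.update e a (sg L), ?_, ?_⟩
    · intro n
      by_cases hn : n = a
      · subst hn; simpa using sg_cases L
      · simpa [hn] using he n
    · have hne : ∀ k ∈ A, Function.update e a (sg L) k = e k := fun k hk => by
        rw [Function.update_of_ne]; rintro rfl; exact ha hk
      rw [Finset.sum_insert ha, Finset.sum_insert ha, Finset.sum_insert ha]
      have e1 : ∑ k ∈ A, Function.update e a (sg L) a * Function.update e a (sg L) k * M a k = sg L * ∑ k ∈ A, e k * M a k := by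
        rw [Finset.mul_sum]; refine Finset.sum_congr rfl fun k hk => ?_
        rw [hne k hk]; simp; ring
      have e2 : ∑ n ∈ A, ∑ k ∈ insert a A, Function.update e a (sg L) n * Function.update e a (sg L) k * M n k
        = sg L * ∑ k ∈ A, e k * M k a + ∑ n ∈ A, ∑ k ∈ A, e n * e k * M n k := by
        rw [Finset.mul_sum, ← Finset.sum_add_distrib]; refine Finset.sum_congr rfl fun k hk => ?_
        rw [Finset.sum_insert ha, hne k hk]
        congr 1
        · simp; ring
        · refine Finset.sum_congr rfl fun m hm => ?_
          rw [hne m hm]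
      rw [e1, e2]
      have e3 : sg L * L = sg L * ∑ k ∈ A, e k * M a k + sg L * ∑ k ∈ A, e k * M k a := by
        rw [← mul_add, ← Finset.sum_add_distrib, hL]; congr 1
        exact Finset.sum_congr rfl fun k _ => by ring
      have e4 : sg L * sg L = 1 := by rcases sg_cases L with h | h <;> simp [h]
      have e5 := abs_nonneg L
      rw [← sg_mul] at e5
      simp only [Function.update_self]
      rw [e4]; linarith

/-- abstract quasi-greedy -/
structure QG {E : Type*} [NormedAddCommGroup E] [NormedSpace ℝ E] (X : ℕ → E) (co : E → ℕ → ℝ) (C : ℝ) : Prop where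
  pos : 0 ≤ C
  fin : ∀ (s : Finset ℕ) (a : ℕ → ℝ) k, co (∑ n ∈ s, a n • X n) k = if k ∈ s then a k else 0
  qg : ∀ f (A : Finset ℕ), (∀ n ∈ A, ∀ k ∉ A, |co f k| ≤ |co f n|) → ‖∑ n ∈ A, co f n • X n‖ ≤ C * ‖f‖

namespace QG
variable {E : Type*} [NormedAddCommGroup E] [NormedSpace ℝ E] {X : ℕ → E} {co : E → ℕ → ℝ} {C : ℝ}

lemma sub (h : QG X co C) {e : ℕ → ℝ} (he : IsSgn e) {A B : Finset ℕ} (hB : B ⊆ A) :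
    ‖∑ n ∈ B, e n • X n‖ ≤ C * ‖∑ n ∈ A, e n • X n‖ := by
  have := h.qg (∑ n ∈ A, e n • X n) B (by
    intro n hn k hk
    rw [h.fin, h.fin, if_pos (hB hn), he.abs]
    split_ifs
    · rw [he.abs]
    · simp)
  convert this using 3 with n hn
  rename_i hn
  rw [h.fin, if_pos (hB hn)]

lemma signs (h : QG X co C) {e e' : ℕ → ℝ} (he : IsSgn e) (he' : IsSgn e') (A : Finset ℕ) :
    ‖∑ n ∈ A, e' n • X n‖ ≤ 2 * C * ‖∑ n ∈ A, e n • X n‖ := by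
  classical
  have e1 : ∑ n ∈ A, e' n • X n = ∑ n ∈ A with e' n = e n, e n • X n - ∑ n ∈ A with ¬ e' n = e n, e n • X n := by
    rw [← Finset.sum_filter_add_sum_filter_not A (fun n => e' n = e n), sub_eq_add_neg, ← Finset.sum_neg_distrib]
    congr 1
    · refine Finset.sum_congr rfl fun n hn => ?_
      rw [(Finset.mem_filter.1 hn).2]
    · refine Finset.sum_congr rfl fun n hn => ?_
      have := (Finset.mem_filter.1 hn).2
      rw [← neg_smul]; congr 1
      rcases he n with h | h <;> rcases he' n with h' | h' <;> simp_all
  rw [e1]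
  have := norm_sub_le (∑ n ∈ A with e' n = e n, e n • X n) (∑ n ∈ A with ¬ e' n = e n, e n • X n)
  have a1 := h.sub he (Finset.filter_subset (fun n => e' n = e n) A)
  have a2 := h.sub he (Finset.filter_subset (fun n => ¬ e' n = e n) A)
  linarith

lemma trunc (h : QG X co C) (f : E) (A : Finset ℕ) (t : ℝ) (ht : 0 < t) 
    (hA : ∀ n, n ∈ A ↔ t < |co f n|) :
    t * ‖∑ n ∈ A, sg (co f n) • X n‖ ≤ 2 * C * ‖f‖ := by
  have := abel_lem2 (fun n => co f n • X n) (fun n => |co f n|⁻¹) (C * ‖f‖) A (fun n _ => by positivity) 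
    (by
      intro B hB hB'
      apply h.qg
      intro n hn k hk
      by_cases hkA : k ∈ A
      · have h1 := (hA n).1 (hB hn)
        have h2 := (hA k).1 hkA
        exact (inv_le_inv₀ (by linarith) (by linarith)).1 (hB' n hn k hkA hk)
      · have h1 := (hA n).1 (hB hn)
        have h2 := (hA k).not.1 hkA
        linarith) t⁻¹ (by positivity) (by
      intro n hn
      have h1 := (hA n).1 hn
      exact inv_anti₀ ht h1.le)
  have e : ∑ n ∈ A, sg (co f n) • X n = ∑ n ∈ A, |co f n|⁻¹ • co f n • X n := by
    refine Finset.sum_congr rfl fun n hn => ?_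
    have h1 := (hA n).1 hn
    rw [smul_smul]; congr 1
    have : |co f n| ≠ 0 := by linarith
    rw [eq_inv_mul_iff_mul_eq₀ this, abs_mul_sg]
  rw [e]
  calc _ ≤ t * (2 * t⁻¹ * (C * ‖f‖)) := by gcongr
    _ = _ := by field_simp


lemma upper {E : Type*} [NormedAddCommGroup E] [InnerProductSpace ℝ E] {X : ℕ → E} {co : E → ℕ → ℝ} {C : ℝ}
    (h : QG X co C) (D : ℝ) (hD : ∀ n, ‖X n‖ ≤ D)
    (A : Finset ℕ) (e : ℕ → ℝ) (he : IsSgn e) : ‖∑ n ∈ A, e n • X n‖ ≤ 2 * C * D * √(A.card) := by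
  have hD0 : 0 ≤ D := (norm_nonneg _).trans (hD 0)
  obtain ⟨e', he', hs⟩ := exists_sign (fun n k => - inner ℝ (X n) (X k)) A
  have h1 : ‖∑ n ∈ A, e' n • X n‖ ^ 2 ≤ D ^ 2 * A.card := by
    have : ‖∑ n ∈ A, e' n • X n‖ ^ 2 = ∑ n ∈ A, ∑ k ∈ A, e' n * e' k * inner ℝ (X n) (X k) := by
      rw [← real_inner_self_eq_norm_sq, sum_inner]
      refine Finset.sum_congr rfl fun n _ => ?_
      rw [inner_sum]
      refine Finset.sum_congr rfl fun k _ => ?_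
      rw [real_inner_smul_left, real_inner_smul_right]; ring
    simp only [mul_neg, Finset.sum_neg_distrib] at hs
    rw [← this] at hs
    have : ∑ n ∈ A, inner ℝ (X n) (X n) ≤ ∑ n ∈ A, D ^ 2 := by
      refine Finset.sum_le_sum fun n _ => ?_
      rw [real_inner_self_eq_norm_sq]; gcongr; exact hD n
    rw [Finset.sum_const, nsmul_eq_mul] at this
    linarith
  have h2 : ‖∑ n ∈ A, e' n • X n‖ ≤ D * √(A.card) := by
    refine abs_le_of_sq_le_sq' ?_ (by positivity) |>.2
    rw [mul_pow, Real.sq_sqrt (by positivity)]; exact h1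
  have := h.signs he' he A
  have hC := h.pos
  calc _ ≤ _ := this
    _ ≤ 2 * C * (D * √(A.card)) := by gcongr
    _ = _ := by ring

lemma lower2 {E : Type*} [NormedAddCommGroup E] [InnerProductSpace ℝ E] {X : ℕ → E} {co : E → ℕ → ℝ} {C : ℝ}
    (h : QG X co C) (c : ℝ) (hc : 0 < c) (hX : ∀ n, c ≤ ‖X n‖)
    (A : Finset ℕ) (e : ℕ → ℝ) (he : IsSgn e) : c * √(A.card) ≤ 2 * C * ‖∑ n ∈ A, e n • X n‖ := by
  obtain ⟨e', he', hs⟩ := exists_sign (fun n k => inner ℝ (X n) (X k)) A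
  have h1 : c ^ 2 * A.card ≤ ‖∑ n ∈ A, e' n • X n‖ ^ 2 := by
    have : ‖∑ n ∈ A, e' n • X n‖ ^ 2 = ∑ n ∈ A, ∑ k ∈ A, e' n * e' k * inner ℝ (X n) (X k) := by
      rw [← real_inner_self_eq_norm_sq, sum_inner]
      refine Finset.sum_congr rfl fun n _ => ?_
      rw [inner_sum]
      refine Finset.sum_congr rfl fun k _ => ?_
      rw [real_inner_smul_left, real_inner_smul_right]; ring
    rw [← this] at hs
    have : ∑ n ∈ A, c ^ 2 ≤ ∑ n ∈ A, inner ℝ (X n) (X n) := by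
      refine Finset.sum_le_sum fun n _ => ?_
      rw [real_inner_self_eq_norm_sq]; gcongr; exact hX n
    rw [Finset.sum_const, nsmul_eq_mul] at this
    linarith
  have h2 : c * √(A.card) ≤ ‖∑ n ∈ A, e' n • X n‖ := by
    refine abs_le_of_sq_le_sq' ?_ (by positivity) |>.2
    rw [mul_pow, Real.sq_sqrt (by positivity)]; exact h1
  exact h2.trans (h.signs he he' A)

end QG

lemma upper_coef {E : Type*} [NormedAddCommGroup E] [NormedSpace ℝ E] {X : ℕ → E} (K : ℝ)
    (h : ∀ (A : Finset ℕ) (e : ℕ → ℝ), IsSgn e → ‖∑ n ∈ A, e n • X n‖ ≤ K * √(A.card)) (hK : 0 ≤ K)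
    (A : Finset ℕ) (a : ℕ → ℝ) (t : ℝ) (ht : 0 ≤ t) (ha : ∀ n ∈ A, |a n| ≤ t) :
    ‖∑ n ∈ A, a n • X n‖ ≤ 2 * t * (K * √(A.card)) := by
  have := abel_lem2 (fun n => sg (a n) • X n) (fun n => |a n|) (K * √(A.card)) A (fun n _ => abs_nonneg _)
    (fun B hB _ => (h B _ (fun n => sg_cases _)).trans (by
      have := Finset.card_le_card hB
      gcongr)) t ht ha
  convert this using 3 with n
  rw [smul_smul, abs_mul_sg]

lemma upper_dyadic {E : Type*} [NormedAddCommGroup E] [NormedSpace ℝ E] {X : ℕ → E} (K q S : ℝ)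
    (h : ∀ (A : Finset ℕ) (e : ℕ → ℝ), IsSgn e → ‖∑ n ∈ A, e n • X n‖ ≤ K * √(A.card)) (hK : 0 ≤ K)
    (hq : 0 < q) (hq1 : q < 1) (a : ℕ → ℝ) (m : ℕ) : ∀ (A : Finset ℕ) (t : ℝ) (_ : 0 < t)
     (_ : ∀ n ∈ A, |a n| ≤ t) (_ : ∀ n ∈ A, t / 2 ^ m < |a n|) (_ : ∑ n ∈ A, |a n| ^ (2 - 2 * q) ≤ S),
    ‖∑ n ∈ A, a n • X n‖ ≤ 4 * K / (1 - (1/2) ^ q) * (t ^ q * √S) := by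
  have hq2 : (1/2 : ℝ) ^ q < 1 := Real.rpow_lt_one (by norm_num) (by norm_num) hq
  have hq3 : 0 < 1 - (1/2 : ℝ) ^ q := by linarith
  induction m with
  | zero =>
    intro A t ht h1 h2 h3
    have : A = ∅ := by
      refine Finset.eq_empty_of_forall_notMem fun n hn => ?_
      have := h1 n hn
      have := h2 n hn
      simp at this; linarith
    subst this
    rw [Finset.sum_empty, norm_zero]
    exact mul_nonneg (div_nonneg (by linarith) hq3.le) (by positivity)
  | succ m ih =>
    intro A t ht h1 h2 h3
    rw [← Finset.sum_filter_add_sum_filter_not A (fun n => |a n| ≤ t / 2)]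
    have hsub : ∀ B ⊆ A, ∑ n ∈ B, |a n| ^ (2 - 2 * q) ≤ S := fun B hB =>
      (Finset.sum_le_sum_of_subset_of_nonneg hB (fun _ _ _ => by positivity)).trans h3
    have i1 := ih (A.filter (fun n => |a n| ≤ t / 2)) (t / 2) (by positivity)
      (fun n hn => (Finset.mem_filter.1 hn).2) (fun n hn => by
        have := h2 n (Finset.mem_filter.1 hn).1
        rwa [pow_succ', ← div_div] at this) (hsub _ (Finset.filter_subset _ _))
    set B := A.filter (fun n => ¬ |a n| ≤ t / 2) with hB
    have i2 := upper_coef K h hK B a t ht.le (fun n hn => h1 n (Finset.mem_filter.1 hn).1)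
    have i3 : B.card * (t / 2) ^ (2 - 2 * q) ≤ S := by
      refine le_trans ?_ (hsub B (Finset.filter_subset _ _))
      rw [← nsmul_eq_mul, ← Finset.sum_const]
      refine Finset.sum_le_sum fun n hn => ?_
      have := (Finset.mem_filter.1 hn).2
      apply Real.rpow_le_rpow (by positivity) (by linarith) (by linarith)
    have i4 : √(B.card) * (t / 2) ^ (1 - q) ≤ √S := by
      rw [show (t / 2) ^ (1 - q) = √((t / 2) ^ (2 - 2 * q)) by
        rw [Real.sqrt_eq_rpow, ← Real.rpow_mul (by positivity)]; congr 1; ring, ← Real.sqrt_mul (by positivity)]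
      exact Real.sqrt_le_sqrt i3
    have i5 : 2 * t * (K * √(B.card)) ≤ 4 * K * (t ^ q * √S) := by
      calc 2 * t * (K * √(B.card)) = 4 * K * ((t / 2) ^ q * (√(B.card) * (t / 2) ^ (1 - q))) := by
            have : (t / 2) ^ q * (t / 2) ^ (1 - q) = t / 2 := by
              rw [← Real.rpow_add (by positivity)]; simp
            linear_combination (-4 * K * √(B.card)) * this
        _ ≤ 4 * K * (t ^ q * √S) := by gcongr; linarith
    refine (norm_add_le _ _).trans ?_
    have i6 : (t / 2) ^ q = t ^ q * (1/2) ^ q := by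
      rw [← Real.mul_rpow ht.le (by norm_num)]; congr 1; ring
    rw [i6] at i1
    calc _ ≤ 4 * K / (1 - (1/2) ^ q) * (t ^ q * (1/2) ^ q * √S) + 4 * K * (t ^ q * √S) := by linarith
      _ = _ := by field_simp; ring

lemma upper_mixed {E : Type*} [NormedAddCommGroup E] [NormedSpace ℝ E] {X : ℕ → E} (K q : ℝ)
    (h : ∀ (A : Finset ℕ) (e : ℕ → ℝ), IsSgn e → ‖∑ n ∈ A, e n • X n‖ ≤ K * √(A.card)) (hK : 0 ≤ K)
    (hq : 0 < q) (hq1 : q < 1) (a : ℕ → ℝ) (A : Finset ℕ) (t : ℝ) (ht : 0 < t)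
    (ha : ∀ n ∈ A, |a n| ≤ t) :
    ‖∑ n ∈ A, a n • X n‖ ≤ 4 * K / (1 - (1/2) ^ q) * (t ^ q * √(∑ n ∈ A, |a n| ^ (2 - 2 * q))) := by
  have hm : ∃ m : ℕ, ∀ n ∈ A.filter (fun n => a n ≠ 0), t / 2 ^ m < |a n| := by
    have : ∀ᶠ m : ℕ in Filter.atTop, ∀ n ∈ A.filter (fun n => a n ≠ 0), t / 2 ^ m < |a n| := by
      rw [Filter.eventually_all_finset]
      intro n hn
      have h0 := abs_pos.2 (Finset.mem_filter.1 hn).2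
      have : Filter.Tendsto (fun m : ℕ => t * (1 / 2 : ℝ) ^ m) Filter.atTop (nhds (t * 0)) :=
        (tendsto_pow_atTop_nhds_zero_of_lt_one (by norm_num) (by norm_num)).const_mul t
      rw [mul_zero] at this
      filter_upwards [this.eventually (gt_mem_nhds h0)] with m hm
      simpa [div_eq_mul_inv] using hm
    exact this.exists
  obtain ⟨m, hm⟩ := hm
  have := upper_dyadic K q _ h hK hq hq1 a m _ t ht (fun n hn => ha n (Finset.mem_filter.1 hn).1) hm
    (Finset.sum_le_sum_of_subset_of_nonneg (Finset.filter_subset _ _) (fun _ _ _ => by positivity))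
  rwa [Finset.sum_filter_of_ne (by
    intro n _ hn h0; exact hn (by simp [h0]))] at this

abbrev L1 := lp (fun _ : ℕ => ℝ) 1
abbrev L2 := lp (fun _ : ℕ => ℝ) 2

lemma mem1_iff (f : ℕ → ℝ) : Mem1 f ↔ Memℓp f 1 := by
  rw [memℓp_gen_iff (by simp)]; simp [Mem1]

lemma mem2_iff (f : ℕ → ℝ) : Mem2 f ↔ Memℓp f 2 := by
  rw [memℓp_gen_iff (by simp)]; simp [Mem2]

lemma norm1_eq (f : L1) : norm1 f = ‖f‖ := by
  rw [lp.norm_eq_tsum_rpow (by simp)]; simp [norm1]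

lemma norm2_eq (f : L2) : norm2 f = ‖f‖ := by
  rw [lp.norm_eq_tsum_rpow (by simp)]; simp [norm2, Real.sqrt_eq_rpow]

lemma coe_sum1 (X : ℕ → L1) (A : Finset ℕ) (a : ℕ → ℝ) :
    ((∑ n ∈ A, a n • X n : L1) : ℕ → ℝ) = fun j => ∑ n ∈ A, a n * X n j := by
  ext j; rw [lp.coeFn_sum]; simp

lemma coe_sum2 (X : ℕ → L2) (A : Finset ℕ) (a : ℕ → ℝ) :
    ((∑ n ∈ A, a n • X n : L2) : ℕ → ℝ) = fun j => ∑ n ∈ A, a n * X n j := by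
  ext j; rw [lp.coeFn_sum]; simp

lemma mem1_rpow {f : ℕ → ℝ} (hf : Mem1 f) (q : ℝ) (hq : 1 ≤ q) : Summable fun j => |f j| ^ q := by
  refine Summable.of_norm_bounded_eventually_nat (g := fun j => |f j|) hf ?_
  filter_upwards [hf.tendsto_atTop_zero.eventually (gt_mem_nhds one_pos)] with j hj
  rw [Real.norm_of_nonneg (by positivity)]
  exact Real.rpow_le_self_of_le_one (abs_nonneg _) hj.le hq

lemma mem1_mem2 {f : ℕ → ℝ} (hf : Mem1 f) : Mem2 f := by
  have := mem1_rpow hf 2 (by norm_num)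
  simpa [Mem2] using this

lemma pairing_summable {f g : ℕ → ℝ} {G : ℝ} (hf : Mem1 f) (hg : ∀ j, |g j| ≤ G) :
    Summable fun j => f j * g j := by
  refine Summable.of_norm_bounded (g := fun j => G * |f j|) (hf.mul_left G) fun j => ?_
  rw [norm_mul, mul_comm]
  exact mul_le_mul_of_nonneg_right (hg j) (norm_nonneg _)

lemma pairing_sum {x : ℕ → ℕ → ℝ} {g : ℕ → ℝ} {G : ℝ} (hx : ∀ n, Mem1 (x n)) (hg : ∀ j, |g j| ≤ G)
    (s : Finset ℕ) (a : ℕ → ℝ) :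
    pairing (fun j => ∑ n ∈ s, a n * x n j) g = ∑ n ∈ s, a n * pairing (x n) g := by
  unfold pairing
  simp only [Finset.sum_mul, ← tsum_mul_left]
  rw [Summable.tsum_finsetSum]
  · simp only [mul_assoc]
  · intro n _
    simpa only [mul_assoc] using (pairing_summable (hx n) hg).mul_left (a n)

lemma pairing_add {f f' g : ℕ → ℝ} {G : ℝ} (hf : Mem1 f) (hf' : Mem1 f') (hg : ∀ j, |g j| ≤ G) :
    pairing (fun j => f j + f' j) g = pairing f g + pairing f' g := by
  unfold pairing
  simp only [add_mul]
  exact (pairing_summable hf hg).tsum_add (pairing_summable hf' hg)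

lemma pairing_le {f g : ℕ → ℝ} {G : ℝ} (hf : Mem1 f) (hg : ∀ j, |g j| ≤ G) :
    |pairing f g| ≤ G * norm1 f := by
  unfold pairing norm1
  rw [← tsum_mul_left, ← Real.norm_eq_abs]
  refine tsum_of_norm_bounded (hf.mul_left G).hasSum fun j => ?_
  rw [norm_mul, mul_comm]
  exact mul_le_mul_of_nonneg_right (hg j) (norm_nonneg _)

lemma mem1_sum {x : ℕ → ℕ → ℝ} (hx : ∀ n, Mem1 (x n)) (s : Finset ℕ) (a : ℕ → ℝ) :
    Mem1 (fun j => ∑ n ∈ s, a n * x n j) := by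
  have := coe_sum1 (fun n => ⟨x n, (mem1_iff _).1 (hx n)⟩) s a
  rw [mem1_iff]
  rw [← show _ = fun j => ∑ n ∈ s, a n * x n j from this]
  exact lp.memℓp _

lemma finite_coef {x g : ℕ → ℕ → ℝ} {G : ℝ} (hx : ∀ n, Mem1 (x n)) (hg : ∀ n j, |g n j| ≤ G)
    (hbiorth : ∀ m n, pairing (x n) (g m) = if m = n then (1 : ℝ) else 0)
    (hdense1 : ∀ f, Mem1 f → ∀ ε > 0, ∃ (s : Finset ℕ) (c : ℕ → ℝ),
      norm1 (fun j => f j - ∑ n ∈ s, c n * x n j) < ε) (f : ℕ → ℝ) (hf : Mem1 f) (t : ℝ) (ht : 0 < t) :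
    ∃ A : Finset ℕ, ∀ n, n ∈ A ↔ t < |pairing f (g n)| := by
  suffices h : Set.Finite {n | t < |pairing f (g n)|} from ⟨h.toFinset, fun n => by simp⟩
  have hG : 0 ≤ G := (abs_nonneg _).trans (hg 0 0)
  obtain ⟨s, c, hs⟩ := hdense1 f hf (t / (G + 1)) (by positivity)
  refine s.finite_toSet.subset fun n hn => ?_
  by_contra hns
  have hns : n ∉ s := hns
  have h1 := mem1_sum hx s c
  have h2 : Mem1 (fun j => f j - ∑ n ∈ s, c n * x n j) := by
    rw [mem1_iff] at *; exact hf.sub h1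
  have h3 := pairing_add h2 h1 (hg n)
  simp only [sub_add_cancel] at h3
  rw [pairing_sum hx (hg n)] at h3
  have h4 : ∑ k ∈ s, c k * pairing (x k) (g n) = 0 := by
    refine Finset.sum_eq_zero fun k hk => ?_
    rw [hbiorth, if_neg (by rintro rfl; exact hns hk), mul_zero]
  have h5 := pairing_le h2 (hg n)
  have h6 : t < |pairing f (g n)| := hn
  change |pairing (fun j => f j - ∑ n ∈ s, c n * x n j) (g n)| ≤ _ at h5
  rw [h4, add_zero] at h3
  have h7 : pairing f (g n) = pairing (fun j => f j - ∑ n ∈ s, c n * x n j) (g n) := h3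
  rw [← h7] at h5
  have h8 : G * norm1 (fun j => f j - ∑ n ∈ s, c n * x n j) ≤ G * (t / (G + 1)) := by gcongr
  have h9 : G * (t / (G + 1)) ≤ t := by
    rw [mul_div_assoc', div_le_iff₀ (by positivity)]; nlinarith
  linarith

lemma count_le1 (h : ℕ → ℝ) (hh : Mem1 h) (t : ℝ) (ht : 0 < t) :
    MeasureTheory.Measure.count {j | t < |h j|} ≤ ENNReal.ofReal (norm1 h / t) := by
  have hfin : Set.Finite {j | t < |h j|} := by
    have := hh.tendsto_cofinite_zero.eventually (gt_mem_nhds ht)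
    rw [Filter.eventually_cofinite] at this
    exact this.subset fun j (hj : t < |h j|) => not_lt.2 hj.le
  rw [MeasureTheory.Measure.count_apply_finite _ hfin, ← ENNReal.ofReal_natCast]
  apply ENNReal.ofReal_le_ofReal
  rw [le_div_iff₀ ht]
  refine le_trans ?_ (hh.sum_le_tsum hfin.toFinset (fun _ _ => abs_nonneg _))
  rw [← nsmul_eq_mul, ← Finset.sum_const]
  exact Finset.sum_le_sum fun j hj => le_of_lt (by simpa using hj)

lemma count_le2 (h : ℕ → ℝ) (hh : Mem2 h) (t : ℝ) (ht : 0 < t) :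
    MeasureTheory.Measure.count {j | t < |h j|} ≤ ENNReal.ofReal (norm2 h ^ 2 / t ^ 2) := by
  have h1 := count_le1 (fun j => h j ^ 2) (by simpa [Mem1, Mem2] using hh) (t ^ 2) (by positivity)
  have e1 : {j | t ^ 2 < |h j ^ 2|} = {j | t < |h j|} := by
    ext j
    change t ^ 2 < |h j ^ 2| ↔ t < |h j|
    rw [abs_pow]
    exact pow_lt_pow_iff_left₀ ht.le (abs_nonneg _) (by norm_num)
  rw [e1] at h1
  convert h1 using 3
  unfold norm2 norm1
  rw [Real.sq_sqrt (tsum_nonneg fun _ => sq_nonneg _)]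
  simp

lemma combine (u : ℕ → ℝ) (hu : ∀ j, 0 ≤ u j) (r : ℝ) (h1 : Summable u) (h2 : Summable fun j => u j ^ r)
    (t : ℝ) (ht : 0 < t) (C : ℝ) (hC : 0 ≤ C) (N : ENNReal)
    (h : N ≤ ENNReal.ofReal (C * (∑' j, if t < u j then u j else 0) / t) +
      ENNReal.ofReal (C * (∑' j, if t < u j then 0 else u j ^ r) / t ^ r)) :
    N ≤ ENNReal.ofReal C *
      ∑' j, (if t < u j then ENNReal.ofReal (u j / t) else ENNReal.ofReal ((u j) ^ r / t ^ r)) := by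
  refine h.trans (le_of_eq ?_)
  have s1 : Summable fun j => if t < u j then u j else 0 := by
    refine Summable.of_nonneg_of_le (fun j => ?_) (fun j => ?_) h1
    · split_ifs; exacts [hu j, le_rfl]
    · split_ifs; exacts [le_rfl, hu j]
  have s2 : Summable fun j => if t < u j then 0 else u j ^ r := by
    refine Summable.of_nonneg_of_le (fun j => ?_) (fun j => ?_) h2
    · have := hu j
      split_ifs <;> positivity
    · have := hu j
      split_ifs; exacts [by positivity, le_rfl]
  rw [mul_div_assoc, mul_div_assoc, ENNReal.ofReal_mul hC, ENNReal.ofReal_mul hC, ← mul_add, ← tsum_div_const, ← tsum_div_const,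
    ENNReal.ofReal_tsum_of_nonneg, ENNReal.ofReal_tsum_of_nonneg, ← ENNReal.tsum_add]
  · congr 2; ext j; split_ifs <;> simp
  · intro j
    have := hu j
    split_ifs <;> positivity
  · exact s2.div_const _
  · intro j
    have := hu j
    split_ifs <;> positivity
  · exact s1.div_const _

lemma final (p r C : ℝ) (hp : 1 < p) (hr : p < r) (hC : 0 ≤ C) : ∃ K > 0, ∀ (u F : ℕ → ℝ), (∀ j, 0 ≤ u j) →
    (∀ j, 0 ≤ F j) → (Summable fun j => u j ^ p) → 
    (∀ t > 0, MeasureTheory.Measure.count {n | 2 * t < F n} ≤ ENNReal.ofReal C *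
      ∑' j, (if t < u j then ENNReal.ofReal (u j / t) else ENNReal.ofReal ((u j) ^ r / t ^ r))) →
    (∑' n, F n ^ p) ^ (1 / p) ≤ K * (∑' j, u j ^ p) ^ (1 / p) := by
  have a1 := sub_pos.2 hp
  have a2 := sub_pos.2 hr
  set K := 2 ^ p * (p * (C * (1 / (p - 1) + 1 / (r - p)))) with hK
  have hK0 : 0 ≤ K := by positivity
  refine ⟨K ^ (1 / p) + 1, by positivity, fun u F hu hF hs h => ?_⟩
  have h1 := marc p r C hp hr u F hu hF h
  rw [← ENNReal.ofReal_tsum_of_nonneg (fun j => by have := hu j; positivity) hs, ← ENNReal.ofReal_mul (by positivity),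
    ← ENNReal.ofReal_mul (by positivity), ← ENNReal.ofReal_mul (by positivity), ← ENNReal.ofReal_mul (by positivity)] at h1
  have hu0 : 0 ≤ ∑' j, u j ^ p := tsum_nonneg fun j => by have := hu j; positivity
  have hF0 : ∀ n, 0 ≤ F n ^ p := fun n => by have := hF n; positivity
  have h2 : ∑' n, F n ^ p ≤ K * ∑' j, u j ^ p := by
    by_cases hsF : Summable fun n => F n ^ p
    · rw [← ENNReal.ofReal_tsum_of_nonneg hF0 hsF, ENNReal.ofReal_le_ofReal_iff (by positivity)] at h1
      refine h1.trans (le_of_eq ?_)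
      rw [hK]; ring
    · rw [tsum_eq_zero_of_not_summable hsF]; positivity
  calc _ ≤ (K * ∑' j, u j ^ p) ^ (1 / p) := Real.rpow_le_rpow (tsum_nonneg hF0) h2 (by positivity)
    _ = K ^ (1 / p) * (∑' j, u j ^ p) ^ (1 / p) := Real.mul_rpow hK0 hu0
    _ ≤ _ := by gcongr; linarith

lemma lower1 {x : ℕ → ℕ → ℝ} (X1 : ℕ → L1) (X2 : ℕ → L2) (e1 : ∀ n, (X1 n : ℕ → ℝ) = x n)
    (e2 : ∀ n, (X2 n : ℕ → ℝ) = x n) (co : L1 → ℕ → ℝ) (C : ℝ) (h : QG X1 co C) (K : ℝ) (hK : 0 < K)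
    (hup : ∀ (A : Finset ℕ) (e : ℕ → ℝ), IsSgn e → ‖∑ n ∈ A, e n • X2 n‖ ≤ K * √(A.card))
    (D : ℝ) (hD : ∀ n, ‖X1 n‖ ≤ D) (c : ℝ) (hc : 0 < c) (hcX : ∀ n, c ≤ ‖X2 n‖) (hC : 0 < C) :
    ∃ κ > 0, ∀ (A : Finset ℕ) (e : ℕ → ℝ), IsSgn e → κ * A.card ≤ ‖∑ n ∈ A, e n • X1 n‖ := by
  have hD0 : 0 ≤ D := (norm_nonneg _).trans (hD 0)
  set b := c ^ 2 / (D + 1) with hb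
  have hb0 : 0 < b := by positivity
  have hj : ∀ n, ∃ j, b ≤ |x n j| := by
    intro n
    by_contra! hcon
    have m1 : Mem1 (x n) := by rw [mem1_iff, ← e1]; exact lp.memℓp _
    have m2 : Mem2 (x n) := by rw [mem2_iff, ← e2]; exact lp.memℓp _
    have h1 : norm1 (x n) ≤ D := by rw [← e1, norm1_eq]; exact hD n
    have h2 : c ≤ norm2 (x n) := by rw [← e2, norm2_eq]; exact hcX n
    have h3 : c ^ 2 ≤ ∑' j, x n j ^ 2 := by
      rw [← Real.sq_sqrt (tsum_nonneg fun j => sq_nonneg (x n j))]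
      unfold norm2 at h2
      gcongr
    have h4 : ∑' j, x n j ^ 2 ≤ ∑' j, b * |x n j| := by
      refine m2.tsum_le_tsum (fun j => ?_) (Summable.mul_left b m1)
      rw [← sq_abs, sq]
      exact mul_le_mul_of_nonneg_right (hcon j).le (abs_nonneg _)
    rw [tsum_mul_left] at h4
    have h5 : b * ∑' j, |x n j| ≤ b * D := by
      unfold norm1 at h1
      gcongr
    have h6 : b * (D + 1) = c ^ 2 := by rw [hb]; field_simp
    nlinarith
  choose j hj using hj
  set m := (K / b) ^ 2 with hm
  have hm0 : 0 < m := by positivity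
  have hfib : ∀ (A : Finset ℕ) i, ((A.filter (fun n => j n = i)).card : ℝ) ≤ m := by
    intro A i
    set B := A.filter (fun n => j n = i)
    have h1 := hup B (fun n => sg (x n i)) (fun n => sg_cases _)
    have h2 := lp.norm_apply_le_norm (p := 2) (by norm_num) (∑ n ∈ B, sg (x n i) • X2 n) i
    rw [coe_sum2] at h2
    have h3 : B.card * b ≤ ∑ n ∈ B, sg (x n i) * X2 n i := by
      rw [← nsmul_eq_mul, ← Finset.sum_const]
      refine Finset.sum_le_sum fun n hn => ?_
      have := (Finset.mem_filter.1 hn).2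
      rw [e2, sg_mul, ← this]; exact hj n
    have h4 : B.card * b ≤ K * √(B.card) := by
      refine h3.trans ((le_abs_self _).trans (h2.trans h1))
    rcases Nat.eq_zero_or_pos B.card with h0 | h0
    · rw [h0]; simpa using hm0.le
    · have h0' : (0:ℝ) < √(B.card) := Real.sqrt_pos.2 (by exact_mod_cast h0)
      have h5 : √(B.card) * √(B.card) = B.card := Real.mul_self_sqrt (by positivity)
      have h6 : √(B.card) ≤ K / b := by
        rw [le_div_iff₀ hb0]
        refine le_of_mul_le_mul_right ?_ h0'
        nlinarith
      rw [hm, ← h5, sq]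
      gcongr
  refine ⟨b / (2 * C * m), by positivity, fun A e' he' => ?_⟩
  obtain ⟨e, he, hs⟩ := exists_sign (fun n k => sg (x n (j n)) * x k (j n)) A
  set f := ∑ n ∈ A, e n • X1 n with hf
  have hfc : ∀ i, f i = ∑ k ∈ A, e k * x k i := by
    intro i; rw [hf, coe_sum1]; simp only [e1]
  have i1 : A.card * b ≤ ∑ n ∈ A, |f (j n)| := by
    calc A.card * b ≤ ∑ n ∈ A, sg (x n (j n)) * x n (j n) := by
          rw [← nsmul_eq_mul, ← Finset.sum_const]
          refine Finset.sum_le_sum fun n hn => ?_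
          rw [sg_mul]; exact hj n
      _ ≤ _ := hs
      _ ≤ _ := by
          refine Finset.sum_le_sum fun n hn => ?_
          have : ∑ k ∈ A, e n * e k * (sg (x n (j n)) * x k (j n)) = e n * sg (x n (j n)) * f (j n) := by
            rw [hfc, Finset.mul_sum]
            exact Finset.sum_congr rfl fun k _ => by ring
          rw [this]
          refine (le_abs_self _).trans (le_of_eq ?_)
          rw [abs_mul, abs_mul, he.abs]
          rcases sg_cases (x n (j n)) with h | h <;> simp [h]
  have mf : Mem1 f := by rw [mem1_iff]; exact lp.memℓp _
  have i2 : ∑ n ∈ A, |f (j n)| ≤ m * ‖f‖ := by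
    rw [Finset.sum_comp (fun i => |f i|) j, ← norm1_eq]
    calc _ ≤ ∑ i ∈ A.image j, m * |f i| := by
          refine Finset.sum_le_sum fun i _ => ?_
          rw [nsmul_eq_mul]
          gcongr
          exact hfib A i
      _ = m * ∑ i ∈ A.image j, |f i| := by rw [Finset.mul_sum]
      _ ≤ _ := by
          gcongr
          exact Summable.sum_le_tsum _ (fun _ _ => abs_nonneg _) mf
  have i3 := h.signs he' he A
  rw [div_mul_eq_mul_div, div_le_iff₀ (by positivity)]
  rw [← hf] at i3
  nlinarith

theorem aux (x g : ℕ → ℕ → ℝ)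
    (hx1 : ∀ n, Mem1 (x n)) (hx2 : ∀ n, Mem2 (x n))
    (hbiorth : ∀ m n, pairing (x n) (g m) = if m = n then (1 : ℝ) else 0)
    (hdense1 : ∀ f, Mem1 f → ∀ ε > 0, ∃ (s : Finset ℕ) (c : ℕ → ℝ),
      norm1 (fun j => f j - ∑ n ∈ s, c n * x n j) < ε)
    (c₂ : ℝ) (hc₂ : 0 < c₂) (hx2lb : ∀ n, c₂ ≤ norm2 (x n)) 
    (D₁ : ℝ) (hx1ub : ∀ n, norm1 (x n) ≤ D₁) (D₂ : ℝ) (hx2ub : ∀ n, norm2 (x n) ≤ D₂)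
    (G : ℝ) (hg : ∀ n j, |g n j| ≤ G) (C₀ : ℝ) (hC₀ : 1 ≤ C₀)
    (hq1 : ∀ f, Mem1 f → ∀ A : Finset ℕ, GreedySet (fun n => pairing f (g n)) A →
        norm1 (fun j => ∑ n ∈ A, pairing f (g n) * x n j) ≤ C₀ * norm1 f)
    (hq2 : ∀ f, Mem2 f → ∀ A : Finset ℕ, GreedySet (fun n => pairing f (g n)) A →
        norm2 (fun j => ∑ n ∈ A, pairing f (g n) * x n j) ≤ C₀ * norm2 f)
    : (∃ K > 0, ∀ f, Mem1 f → ∀ t > 0, 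
        MeasureTheory.Measure.count {n | t < |pairing f (g n)|} ≤ ENNReal.ofReal (K * norm1 f / t) ∧
        MeasureTheory.Measure.count {n | t < |pairing f (g n)|} ≤ ENNReal.ofReal (K * norm2 f ^ 2 / t ^ 2)) ∧
     (∀ q : ℝ, 0 < q → q < 1 → ∃ K > 0, ∀ (A : Finset ℕ) (a : ℕ → ℝ) (t : ℝ), 0 < t → (∀ n ∈ A, |a n| ≤ t) →
        norm2 (fun j => ∑ n ∈ A, a n * x n j) ^ 2 ≤ K * (t ^ (2 * q) * ∑ n ∈ A, |a n| ^ (2 - 2 * q))) ∧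
     (∀ (A : Finset ℕ) (a : ℕ → ℝ), norm1 (fun j => ∑ n ∈ A, a n * x n j) ≤ D₁ * ∑ n ∈ A, |a n|) := by
  set X1 : ℕ → L1 := fun n => ⟨x n, (mem1_iff _).1 (hx1 n)⟩ with hX1
  set X2 : ℕ → L2 := fun n => ⟨x n, (mem2_iff _).1 (hx2 n)⟩ with hX2
  have e1 : ∀ n, (X1 n : ℕ → ℝ) = x n := fun n => rfl
  have e2 : ∀ n, (X2 n : ℕ → ℝ) = x n := fun n => rfl
  have s1 : ∀ (A : Finset ℕ) (a : ℕ → ℝ), ((∑ n ∈ A, a n • X1 n : L1) : ℕ → ℝ) = fun j => ∑ n ∈ A, a n * x n j :=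
    fun A a => coe_sum1 X1 A a
  have s2 : ∀ (A : Finset ℕ) (a : ℕ → ℝ), ((∑ n ∈ A, a n • X2 n : L2) : ℕ → ℝ) = fun j => ∑ n ∈ A, a n * x n j :=
    fun A a => coe_sum2 X2 A a
  have hfin : ∀ (s : Finset ℕ) (a : ℕ → ℝ) k, pairing (fun j => ∑ n ∈ s, a n * x n j) (g k) = if k ∈ s then a k else 0 := by
    intro s a k
    rw [pairing_sum hx1 (hg k)]
    simp [hbiorth]
  have Q1 : QG X1 (fun f k => pairing f (g k)) C₀ := by
    refine ⟨by linarith, fun s a k => ?_, fun f A hA => ?_⟩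
    · rw [s1, hfin]
    · rw [← norm1_eq, ← norm1_eq, s1]
      exact hq1 f ((mem1_iff _).2 (lp.memℓp f)) A hA
  have Q2 : QG X2 (fun f k => pairing f (g k)) C₀ := by
    refine ⟨by linarith, fun s a k => ?_, fun f A hA => ?_⟩
    · rw [s2, hfin]
    · rw [← norm2_eq, ← norm2_eq, s2]
      exact hq2 f ((mem2_iff _).2 (lp.memℓp f)) A hA
  have b1 : ∀ n, ‖X1 n‖ ≤ D₁ := fun n => by rw [← norm1_eq]; exact hx1ub n
  have b2 : ∀ n, ‖X2 n‖ ≤ D₂ := fun n => by rw [← norm2_eq]; exact hx2ub n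
  have b2' : ∀ n, c₂ ≤ ‖X2 n‖ := fun n => by rw [← norm2_eq]; exact hx2lb n
  have hD₂ : 0 < D₂ := hc₂.trans_le ((b2' 0).trans (b2 0))
  have hup := Q2.upper D₂ b2
  have hlo2 := Q2.lower2 c₂ hc₂ b2'
  obtain ⟨κ, hκ, hlo1⟩ := lower1 X1 X2 e1 e2 _ C₀ Q1 (2 * C₀ * D₂) (by positivity) hup D₁ b1 c₂ hc₂ b2' (by linarith)
  refine ⟨?_, ?_, ?_⟩
  · set K1 := 2 * C₀ / κ with hK1
    set K2 := (2 * C₀ * (2 * C₀) / c₂) ^ 2 with hK2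
    have hK1p : 0 < K1 := by positivity
    have hK2p : 0 < K2 := by positivity
    refine ⟨K1 + K2, by positivity, fun f hf t ht => ?_⟩
    obtain ⟨A, hA⟩ := finite_coef hx1 hg hbiorth hdense1 f hf t ht
    have hset : {n | t < |pairing f (g n)|} = (A : Set ℕ) := by
      ext n; exact (hA n).symm
    rw [hset, MeasureTheory.Measure.count_apply_finset, ← ENNReal.ofReal_natCast]
    constructor
    · apply ENNReal.ofReal_le_ofReal
      have i1 := Q1.trunc ⟨f, (mem1_iff _).1 hf⟩ A t ht hA
      rw [← norm1_eq (⟨f, (mem1_iff _).1 hf⟩ : L1)] at i1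
      have i2 := hlo1 A (fun n => sg (pairing f (g n))) (fun n => sg_cases _)
      have i3 : t * (κ * A.card) ≤ 2 * C₀ * norm1 f := (mul_le_mul_of_nonneg_left i2 ht.le).trans i1
      have n0 : 0 ≤ norm1 f := tsum_nonneg fun _ => abs_nonneg _
      calc (A.card : ℝ) ≤ K1 * norm1 f / t := by
            rw [le_div_iff₀ ht, hK1, div_mul_eq_mul_div, le_div_iff₀ hκ]; linarith
        _ ≤ _ := by gcongr; linarith
    · apply ENNReal.ofReal_le_ofReal
      have i1 := Q2.trunc ⟨f, (mem2_iff _).1 (mem1_mem2 hf)⟩ A t ht hA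
      rw [← norm2_eq (⟨f, (mem2_iff _).1 (mem1_mem2 hf)⟩ : L2)] at i1
      have i2 := hlo2 A (fun n => sg (pairing f (g n))) (fun n => sg_cases _)
      have n0 : 0 ≤ norm2 f := Real.sqrt_nonneg _
      have i3 : t * (c₂ * √(A.card)) ≤ 2 * C₀ * (2 * C₀ * norm2 f) := by
        calc _ ≤ t * _ := mul_le_mul_of_nonneg_left i2 ht.le
          _ = 2 * C₀ * (t * ‖∑ n ∈ A, sg (pairing f (g n)) • X2 n‖) := by ring
          _ ≤ _ := by gcongr
      have i4 : √(A.card) ≤ 2 * C₀ * (2 * C₀) / c₂ * norm2 f / t := by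
        rw [le_div_iff₀ ht, div_mul_eq_mul_div, le_div_iff₀ hc₂]; linarith
      calc (A.card : ℝ) = √(A.card) ^ 2 := (Real.sq_sqrt (by positivity)).symm
        _ ≤ (2 * C₀ * (2 * C₀) / c₂ * norm2 f / t) ^ 2 := by gcongr
        _ = K2 * norm2 f ^ 2 / t ^ 2 := by rw [hK2]; ring
        _ ≤ _ := by gcongr; linarith
  · intro q hq hq1
    refine ⟨(4 * (2 * C₀ * D₂) / (1 - (1/2) ^ q)) ^ 2, ?_, fun A a t ht ha => ?_⟩
    · have hq2 : (1/2 : ℝ) ^ q < 1 := Real.rpow_lt_one (by norm_num) (by norm_num) hq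
      have hq3 : 0 < 1 - (1/2 : ℝ) ^ q := by linarith
      exact pow_pos (div_pos (by positivity) hq3) _
    · have := upper_mixed (2 * C₀ * D₂) q hup (by positivity) hq hq1 a A t ht ha
      rw [← norm2_eq, s2] at this
      have n0 : 0 ≤ norm2 (fun j => ∑ n ∈ A, a n * x n j) := Real.sqrt_nonneg _
      refine (pow_le_pow_left₀ n0 this 2).trans (le_of_eq ?_)
      rw [mul_pow, mul_pow, Real.sq_sqrt (Finset.sum_nonneg fun _ _ => by positivity),
        show 2 * q = q * 2 by ring, Real.rpow_mul ht.le, Real.rpow_two]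
  · intro A a
    rw [← s1, norm1_eq, Finset.mul_sum]
    refine (norm_sum_le _ _).trans (Finset.sum_le_sum fun n _ => ?_)
    rw [norm_smul, mul_comm, Real.norm_eq_abs]
    gcongr
    exact b1 n
/-- A system which is simultaneously a quasi-greedy basis of `ℓ_1` and of `ℓ_2`
is equivalent, in `ℓ_p` for every `1 < p < 2`, to the canonical `ℓ_p` basis. -/
theorem stmt14 (x g : ℕ → ℕ → ℝ)
    (hx1 : ∀ n, Mem1 (x n)) (hx2 : ∀ n, Mem2 (x n))
    (hg2 : ∀ n, Mem2 (g n))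
    (hbiorth : ∀ m n, pairing (x n) (g m) = if m = n then (1 : ℝ) else 0)
    (hdense1 : ∀ f, Mem1 f → ∀ ε > 0, ∃ (s : Finset ℕ) (c : ℕ → ℝ),
      norm1 (fun j => f j - ∑ n ∈ s, c n * x n j) < ε)
    (hdense2 : ∀ f, Mem2 f → ∀ ε > 0, ∃ (s : Finset ℕ) (c : ℕ → ℝ),
      norm2 (fun j => f j - ∑ n ∈ s, c n * x n j) < ε)
    (hx1lb : ∃ c > 0, ∀ n, c ≤ norm1 (x n)) (hx1ub : ∃ C : ℝ, ∀ n, norm1 (x n) ≤ C)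
    (hx2lb : ∃ c > 0, ∀ n, c ≤ norm2 (x n)) (hx2ub : ∃ C : ℝ, ∀ n, norm2 (x n) ≤ C)
    (hginf : ∃ G : ℝ, ∀ n j, |g n j| ≤ G) (hg2ub : ∃ G : ℝ, ∀ n, norm2 (g n) ≤ G)
    (hqg : ∃ C₀ ≥ (1 : ℝ),
      (∀ f, Mem1 f → ∀ A : Finset ℕ, GreedySet (fun n => pairing f (g n)) A →
        norm1 (fun j => ∑ n ∈ A, pairing f (g n) * x n j) ≤ C₀ * norm1 f) ∧
      (∀ f, Mem2 f → ∀ A : Finset ℕ, GreedySet (fun n => pairing f (g n)) A →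
        norm2 (fun j => ∑ n ∈ A, pairing f (g n) * x n j) ≤ C₀ * norm2 f)) :
    ∀ p : ℝ, 1 < p → p < 2 →
      ∃ c C : ℝ, 0 < c ∧ c ≤ C ∧
        ∀ (s : Finset ℕ) (a : ℕ → ℝ), (∀ n ∉ s, a n = 0) →
          c * (∑ n ∈ s, |a n| ^ p) ^ (1 / p)
              ≤ normP p (fun j => ∑ n ∈ s, a n * x n j) ∧
          normP p (fun j => ∑ n ∈ s, a n * x n j)
              ≤ C * (∑ n ∈ s, |a n| ^ p) ^ (1 / p) := by
  intro p hp hp2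
  obtain ⟨c₂, hc₂, hx2lb⟩ := hx2lb
  obtain ⟨D₁, hx1ub⟩ := hx1ub
  obtain ⟨D₂, hx2ub⟩ := hx2ub
  obtain ⟨G, hg⟩ := hginf
  obtain ⟨C₀, hC₀, hq1, hq2⟩ := hqg
  obtain ⟨⟨K, hK, hweak⟩, hmix, hup1⟩ := aux x g hx1 hx2 hbiorth hdense1 c₂ hc₂ hx2lb D₁ hx1ub D₂ hx2ub G hg C₀ hC₀ hq1 hq2
  obtain ⟨K', hK', hmix⟩ := hmix ((2 - p) / 4) (by linarith) (by linarith)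
  have hD₁ : 0 ≤ D₁ := le_trans (tsum_nonneg fun _ => abs_nonneg _) (hx1ub 0)
  obtain ⟨M₁, hM₁, hlow⟩ := final p 2 K hp hp2 hK.le
  obtain ⟨M₂, hM₂, hupp⟩ := final p (2 - 2 * ((2 - p) / 4)) (D₁ + K') hp (by linarith) (by positivity)
  refine ⟨1 / M₁, M₂ + 1 / M₁, by positivity, by linarith, fun s a ha => ?_⟩
  set f := fun j => ∑ n ∈ s, a n * x n j with hf
  have hf1 : Mem1 f := mem1_sum hx1 s a
  have hsupp : ∀ q : ℝ, 0 < q → ∀ n ∉ s, |a n| ^ q = 0 := fun q hq n hn => by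
    rw [ha n hn, abs_zero, Real.zero_rpow hq.ne']
  have htsum : ∑' n, |a n| ^ p = ∑ n ∈ s, |a n| ^ p := tsum_eq_sum (hsupp p (by linarith))
  have hpair : ∀ n, pairing f (g n) = a n := by
    intro n
    rw [hf, pairing_sum hx1 (hg n)]
    simp only [hbiorth, mul_ite, mul_one, mul_zero, Finset.sum_ite_eq]
    split_ifs with h
    · rfl
    · exact (ha n h).symm
  constructor
  · have := hlow (fun j => |f j|) (fun n => |a n|) (fun _ => abs_nonneg _) (fun _ => abs_nonneg _)
      (mem1_rpow hf1 p hp.le) (by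
        intro t ht
        refine combine (fun j => |f j|) (fun _ => abs_nonneg _) 2 hf1 (mem1_rpow hf1 2 (by norm_num)) t ht K hK.le _ ?_
        set f1 := fun j => if t < |f j| then f j else 0 with hf1'
        set f2 := fun j => if t < |f j| then 0 else f j with hf2'
        have m1 : Mem1 f1 := by
          refine Summable.of_nonneg_of_le (fun j => abs_nonneg _) (fun j => ?_) hf1
          simp only [hf1']; split_ifs <;> simp
        have m2 : Mem1 f2 := by
          refine Summable.of_nonneg_of_le (fun j => abs_nonneg _) (fun j => ?_) hf1
          simp only [hf2']; split_ifs <;> simp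
        have hadd : ∀ n, a n = pairing f1 (g n) + pairing f2 (g n) := by
          intro n
          rw [← hpair n, ← pairing_add m1 m2 (hg n)]
          congr 1; ext j; simp only [hf1', hf2']; split_ifs <;> simp
        have n1 : norm1 f1 = ∑' j, if t < |f j| then |f j| else 0 := by
          unfold norm1; congr 1; ext j; simp only [hf1']; split_ifs <;> simp
        have n2 : norm2 f2 ^ 2 = ∑' j, if t < |f j| then 0 else |f j| ^ (2:ℝ) := by
          unfold norm2
          rw [Real.sq_sqrt (tsum_nonneg fun _ => sq_nonneg _)]
          congr 1; ext j; simp only [hf2']; split_ifs <;> simp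
        have w1 := (hweak f1 m1 t ht).1
        have w2 := (hweak f2 m2 t ht).2
        rw [n1] at w1
        rw [n2, ← Real.rpow_two t] at w2
        refine le_trans (le_trans (MeasureTheory.measure_mono ?_) (MeasureTheory.measure_union_le _ _)) (add_le_add w1 w2)
        intro n hn
        have hn : 2 * t < |a n| := hn
        by_contra hcon
        have hcon : ¬ (t < |pairing f1 (g n)| ∨ t < |pairing f2 (g n)|) := hcon
        push Not at hcon
        have := abs_add_le (pairing f1 (g n)) (pairing f2 (g n))
        rw [← hadd] at this
        linarith [hcon.1, hcon.2])
    rw [htsum] at this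
    rw [one_div M₁, inv_mul_le_iff₀ hM₁]
    exact this
  · have := hupp (fun n => |a n|) (fun j => |f j|) (fun _ => abs_nonneg _) (fun _ => abs_nonneg _)
      (summable_of_ne_finset_zero (s := s) (hsupp p (by linarith))) (by
        intro t ht
        have hr : 0 < 2 - 2 * ((2 - p) / 4) := by linarith
        refine combine (fun n => |a n|) (fun _ => abs_nonneg _) _
          (summable_of_ne_finset_zero (s := s) (fun n hn => by simp [ha n hn]))
          (summable_of_ne_finset_zero (s := s) (hsupp _ hr)) t ht _ (by positivity) _ ?_
        rw [tsum_eq_sum (s := s) (fun n hn => by simp [ha n hn]),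
          tsum_eq_sum (s := s) (fun n hn => by rw [hsupp _ hr n hn]; simp)]
        have k1 : ∑ n ∈ s, (if t < |a n| then |a n| else 0) = ∑ n ∈ s with t < |a n|, |a n| :=
          (Finset.sum_filter _ _).symm
        have k2 : ∑ n ∈ s, (if t < |a n| then 0 else |a n| ^ (2 - 2 * ((2 - p) / 4))) =
            ∑ n ∈ s with ¬ t < |a n|, |a n| ^ (2 - 2 * ((2 - p) / 4)) := by
          rw [Finset.sum_filter]; simp only [ite_not]
        rw [k1, k2]
        set A1 := s.filter (fun n => t < |a n|) with hA1
        set A2 := s.filter (fun n => ¬ t < |a n|) with hA2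
        have w1 := count_le1 _ (mem1_sum hx1 A1 a) t ht
        have w2 := count_le2 _ (mem1_mem2 (mem1_sum hx1 A2 a)) t ht
        have v1 := hup1 A1 a
        have v2 := hmix A2 a t ht (fun n hn => not_lt.1 (Finset.mem_filter.1 hn).2)
        have z1 : 0 ≤ ∑ n ∈ A1, |a n| := Finset.sum_nonneg fun _ _ => abs_nonneg _
        have z2 : 0 ≤ ∑ n ∈ A2, |a n| ^ (2 - 2 * ((2 - p) / 4)) := Finset.sum_nonneg fun _ _ => by positivity
        have u1 : norm1 (fun j => ∑ n ∈ A1, a n * x n j) / t ≤ (D₁ + K') * (∑ n ∈ A1, |a n|) / t := by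
          gcongr
          refine v1.trans ?_
          gcongr; linarith
        have u2 : norm2 (fun j => ∑ n ∈ A2, a n * x n j) ^ 2 / t ^ 2 ≤
            (D₁ + K') * (∑ n ∈ A2, |a n| ^ (2 - 2 * ((2 - p) / 4))) / t ^ (2 - 2 * ((2 - p) / 4)) := by
          have e : t ^ (2 - 2 * ((2 - p) / 4)) = t ^ 2 / t ^ (2 * ((2 - p) / 4)) := by
            rw [Real.rpow_sub ht, Real.rpow_two]
          have pp : 0 < t ^ (2 * ((2 - p) / 4)) := Real.rpow_pos_of_pos ht _
          rw [e, div_div_eq_mul_div]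
          gcongr
          refine v2.trans ?_
          rw [mul_comm (t ^ _), ← mul_assoc]
          gcongr; linarith
        refine le_trans (le_trans (MeasureTheory.measure_mono ?_) (MeasureTheory.measure_union_le _ _))
          (add_le_add (w1.trans (ENNReal.ofReal_le_ofReal u1)) (w2.trans (ENNReal.ofReal_le_ofReal u2)))
        intro j hj
        have hj : 2 * t < |f j| := hj
        by_contra hcon
        have hcon : ¬ (t < |∑ n ∈ A1, a n * x n j| ∨ t < |∑ n ∈ A2, a n * x n j|) := hcon
        push Not at hcon
        have h1 := abs_add_le (∑ n ∈ A1, a n * x n j) (∑ n ∈ A2, a n * x n j)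
        rw [hA1, hA2, Finset.sum_filter_add_sum_filter_not] at h1
        rw [← hA1, ← hA2] at h1
        have h2 : |f j| ≤ _ := h1
        linarith [hcon.1, hcon.2])
    rw [htsum] at this
    refine this.trans ?_
    have : 0 ≤ 1 / M₁ := by positivity
    gcongr
    linarith
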